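/- Let n ≥ 1 be an integer, θ ∈ (0, π/2], 1 ≤ k ≤ n, A > 0, c₀ > 0 and c₁ > 0. Let (s_i)_{i∈ℕ} be a sequence of smooth capillary functions on C_θ with τ[s_i] > 0, with 1-homogeneous extensions G_i, such that for every i: sup_{u ∈ S^n_θ} (|G_i(u)| + ‖∇G_i(u)‖ + ‖D²G_i(u)‖) ≤ A, ∫_{C_θ} s_i(ζ) ζ_j dσ(ζ) = 0 for all j = 1,…,n, and σ_k(τ[s_i])(ζ) ≥ c₀ for all ζ ∈ C_θ. Set K_i := convexHull(∇G_i(S^n_θ)) and Ω_i := K_i ∩ {x_{n+1} = 0}, and assume that for every i, sup{⟨v, x⟩ : x ∈ Ω_i, v a unit vector with v_{n+1} = 0} ≥ c₁. Then there exists a constant c₂ > 0 such that the (n+1)-dimensional Lebesgue volume satisfies vol(K_i) ≥ c₂ for all i. -/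

import Mathlib

open MeasureTheory Real Set
open scoped RealInnerProductSpace

noncomputable section

abbrev V (n : ℕ) := EuclideanSpace ℝ (Fin (n + 1))

/-- The vertical unit vector `E_{n+1}`. -/
def Etop (n : ℕ) : V n := EuclideanSpace.single (Fin.last n) 1

/-- The spherical cap `S^n_θ`. -/
def sphCap (n : ℕ) (θ : ℝ) : Set (V n) :=
  {u | ‖u‖ = 1 ∧ Real.cos θ ≤ u (Fin.last n)}

/-- The boundary circle `∂S^n_θ`. -/
def sphCapBdry (n : ℕ) (θ : ℝ) : Set (V n) :=
  {u | ‖u‖ = 1 ∧ u (Fin.last n) = Real.cos θ}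

/-- The capillary cap `C_θ`. -/
def capCap (n : ℕ) (θ : ℝ) : Set (V n) :=
  {ζ | 0 ≤ ζ (Fin.last n) ∧ ‖ζ + Real.cos θ • Etop n‖ = 1}

/-- The open cone over `S^n_θ`. -/
def coneCap (n : ℕ) (θ : ℝ) : Set (V n) :=
  {x | ∃ l : ℝ, 0 < l ∧ ∃ u ∈ sphCap n θ, x = l • u}

/-- `G` is a positively 1-homogeneous extension of `g : C_θ → ℝ` which is `C^m` on an
open neighborhood of the cone over `S^n_θ`. -/
def IsHomExt (n : ℕ) (θ : ℝ) (m : ℕ∞) (g G : V n → ℝ) : Prop :=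
  (∃ U : Set (V n), IsOpen U ∧ coneCap n θ ⊆ U ∧ ContDiffOn ℝ m G U) ∧
  (∀ l : ℝ, 0 < l → ∀ u ∈ sphCap n θ, G (l • u) = l * G u) ∧
  (∀ ζ ∈ capCap n θ, G (ζ + Real.cos θ • Etop n) = g ζ)

/-- The Hessian of `G` at `u` as a quadratic/bilinear form. -/
def hessQ (n : ℕ) (G : V n → ℝ) (u v w : V n) : ℝ :=
  fderiv ℝ (fderiv ℝ G) u v w

/-- The Hessian matrix `D²G(u)` in the standard coordinates. -/
def hessM (n : ℕ) (G : V n → ℝ) (u : V n) : Matrix (Fin (n + 1)) (Fin (n + 1)) ℝ :=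
  fun i j => fderiv ℝ (fderiv ℝ G) u (EuclideanSpace.single i 1) (EuclideanSpace.single j 1)

/-- `σ_j` of the eigenvalues of `D²G(u)` (via characteristic polynomial coefficients). -/
def sigmaElem (n : ℕ) (j : ℕ) (G : V n → ℝ) (u : V n) : ℝ :=
  (-1 : ℝ) ^ j * ((hessM n G u).charpoly.coeff (n + 1 - j))

/-- `τ[g] ≥ 0` : the Hessian of the extension is positive semidefinite on `S^n_θ`. -/
def TauNonneg (n : ℕ) (θ : ℝ) (G : V n → ℝ) : Prop :=
  ∀ u ∈ sphCap n θ, ∀ v : V n, 0 ≤ hessQ n G u v v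

/-- `τ[g] > 0`. -/
def TauPos (n : ℕ) (θ : ℝ) (G : V n → ℝ) : Prop :=
  TauNonneg n θ G ∧
  ∀ u ∈ sphCap n θ, ∀ v : V n, v ≠ 0 → ⟪v, u⟫ = 0 → 0 < hessQ n G u v v

/-- Capillary (Robin) boundary condition: `∂_{n+1}G = 0` on `∂S^n_θ`. -/
def IsCapillaryF (n : ℕ) (θ : ℝ) (G : V n → ℝ) : Prop :=
  ∀ u ∈ sphCapBdry n θ, fderiv ℝ G u (Etop n) = 0

/-- Reflection negating the horizontal coordinates. -/
def horizNeg (n : ℕ) (ζ : V n) : V n := (2 * ζ (Fin.last n)) • Etop n - ζ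

/-- Support function of a set. -/
def suppFn (n : ℕ) (K : Set (V n)) (u : V n) : ℝ := sSup ((fun y => ⟪u, y⟫) '' K)

/-- Relative interior (within the hyperplane `{x_{n+1}=0}`) of the base `K ∩ {x_{n+1}=0}`. -/
def relintBase (n : ℕ) (K : Set (V n)) : Set (V n) :=
  {x | x (Fin.last n) = 0 ∧ ∃ ε > 0, ∀ y : V n, y (Fin.last n) = 0 → ‖y - x‖ < ε → y ∈ K}

/-- A `θ`-capillary convex body. -/
def IsCapBody (n : ℕ) (θ : ℝ) (K : Set (V n)) : Prop :=
  IsCompact K ∧ Convex ℝ K ∧ (interior K).Nonempty ∧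
  (∀ x ∈ K, 0 ≤ x (Fin.last n)) ∧
  (∀ x ∈ K, 0 < x (Fin.last n) → ∀ u : V n, ‖u‖ = 1 → ⟪u, x⟫ = suppFn n K u →
    Real.cos θ ≤ u (Fin.last n)) ∧
  (∀ v : V n, ‖v‖ = 1 → v (Fin.last n) = 0 →
    suppFn n K (Real.sin θ • v + Real.cos θ • Etop n) = Real.sin θ * suppFn n K v) ∧
  (relintBase n K).Nonempty

/-- `ψ` is one of `x²`, `x^p (p<0)`, `-log x`. -/
def PsiOK (ψ : ℝ → ℝ) : Prop :=
  (ψ = fun x : ℝ => x ^ 2) ∨ (∃ p : ℝ, p < 0 ∧ ψ = fun x : ℝ => x ^ p) ∨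
    (ψ = fun x : ℝ => -Real.log x)

theorem Multiset.esymm_cons_succ (a : ℝ) (s : Multiset ℝ) (k : ℕ) :
    (a ::ₘ s).esymm (k + 1) = s.esymm (k + 1) + a * s.esymm k := by
  simp [Multiset.esymm, Multiset.powersetCard_cons, Multiset.sum_map_mul_left]

theorem Multiset.esymm_le_sum_pow (s : Multiset ℝ) (hs : ∀ a ∈ s, 0 ≤ a) (k : ℕ) :
    s.esymm k ≤ s.sum ^ k := by
  induction s using Multiset.induction_on generalizing k with
  | empty =>
    cases k with
    | zero => simp [Multiset.esymm]
    | succ k => simp [Multiset.esymm, Multiset.powersetCard_zero_right]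
  | cons a s ih =>
    have ha : 0 ≤ a := hs a (Multiset.mem_cons_self a s)
    have hs' : ∀ b ∈ s, 0 ≤ b := fun b hb => hs b (Multiset.mem_cons_of_mem hb)
    have hsum : 0 ≤ s.sum := Multiset.sum_nonneg hs'
    cases k with
    | zero => simp [Multiset.esymm]
    | succ k =>
      rw [Multiset.esymm_cons_succ, Multiset.sum_cons]
      have h1 := ih hs' (k + 1)
      have h2 := mul_le_mul_of_nonneg_left (ih hs' k) ha
      have h3 : s.sum ^ k ≤ (a + s.sum) ^ k := by gcongr; linarith
      have h4 := mul_le_mul_of_nonneg_left h3 (add_nonneg ha hsum)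
      rw [pow_succ'] at h1
      rw [pow_succ' (a + s.sum)]
      linarith

/-- For positive semidefinite matrices, the elementary symmetric polynomials of the eigenvalues
are dominated by the powers of the trace. -/
theorem Matrix.PosSemidef.charpoly_coeff_le_trace_pow {m : ℕ} {M : Matrix (Fin m) (Fin m) ℝ}
    (hM : M.PosSemidef) {k : ℕ} (hk : k ≤ m) :
    (-1 : ℝ) ^ k * M.charpoly.coeff (m - k) ≤ M.trace ^ k := by
  set s : Multiset ℝ := Finset.univ.val.map hM.1.eigenvalues with hs
  have hcard : Multiset.card s = m := by simp [hs]
  have hchar : M.charpoly = (s.map fun t => Polynomial.X - Polynomial.C t).prod := by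
    rw [hM.1.charpoly_eq, hs, Multiset.map_map]
    rfl
  have htr : M.trace = s.sum := by
    rw [hM.1.trace_eq_sum_eigenvalues]
    rfl
  rw [hchar, Multiset.prod_X_sub_C_coeff s (by omega), hcard, htr,
    Nat.sub_sub_self hk, ← mul_assoc, ← pow_add, Even.neg_one_pow ⟨k, rfl⟩, one_mul]
  refine Multiset.esymm_le_sum_pow s (fun a ha => ?_) k
  obtain ⟨i, -, rfl⟩ := Multiset.mem_map.1 ha
  exact hM.eigenvalues_nonneg i

theorem exists_unit_orthogonal {E : Type*} [NormedAddCommGroup E] [InnerProductSpace ℝ E]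
    [FiniteDimensional ℝ E] (m : ℕ) (hm : m < Module.finrank ℝ E) (f : ℕ → E) :
    ∃ e : E, ‖e‖ = 1 ∧ ∀ j < m, ⟪e, f j⟫ = 0 := by
  classical
  set S : Submodule ℝ E := Submodule.span ℝ (f '' (Finset.range m : Set ℕ)) with hS
  have hfin : Module.finrank ℝ S < Module.finrank ℝ E := by
    refine lt_of_le_of_lt ?_ hm
    have h := finrank_span_finset_le_card (R := ℝ) (Finset.image f (Finset.range m))
    rw [Finset.coe_image] at h
    exact h.trans (Finset.card_image_le.trans (by simp))
  have hne : Sᗮ ≠ ⊥ := by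
    intro h
    rw [Submodule.orthogonal_eq_bot_iff] at h
    rw [h, finrank_top] at hfin
    exact lt_irrefl _ hfin
  obtain ⟨v, hv, hv0⟩ := Submodule.exists_mem_ne_zero_of_ne_bot hne
  refine ⟨‖v‖⁻¹ • v, by
    rw [norm_smul, norm_inv, norm_norm, inv_mul_cancel₀ (norm_ne_zero_iff.2 hv0)],
    fun j hj => ?_⟩
  have h := (Submodule.mem_orthogonal' S v).1 hv (f j)
    (Submodule.subset_span ⟨j, by simpa using hj, rfl⟩)
  rw [inner_smul_left, h, mul_zero]

theorem exists_triangular_system {E : Type*} [NormedAddCommGroup E] [InnerProductSpace ℝ E]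
    [FiniteDimensional ℝ E] {ε : ℝ} {K : Set E} (x₀ : E)
    (hK : ∀ e : E, ‖e‖ = 1 → ∃ x ∈ K, ∃ y ∈ K, ε ≤ ⟪e, x - y⟫)
    (m : ℕ) (hm : m ≤ Module.finrank ℝ E) :
    ∃ f e : ℕ → E, ∀ i < m, x₀ + f i ∈ K ∧ ‖e i‖ = 1 ∧ (∀ j < i, ⟪e i, f j⟫ = 0) ∧
      ε / 2 ≤ |⟪e i, f i⟫| := by
  induction m with
  | zero => exact ⟨0, 0, by simp⟩
  | succ m ih =>
    obtain ⟨f, e, h⟩ := ih (by omega)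
    obtain ⟨v, hv, hvf⟩ := exists_unit_orthogonal m (by omega) f
    obtain ⟨z, hz, hzv⟩ : ∃ z ∈ K, ε / 2 ≤ |⟪v, z - x₀⟫| := by
      obtain ⟨x, hx, y, hy, hxy⟩ := hK v hv
      by_contra! hcon
      have h1 := abs_lt.1 (hcon x hx)
      have h2 := abs_lt.1 (hcon y hy)
      rw [inner_sub_right] at h1 h2 hxy
      linarith [h1.2, h2.1]
    refine ⟨Function.update f m (z - x₀), Function.update e m v, fun i hi => ?_⟩
    rcases Nat.lt_succ_iff_lt_or_eq.1 hi with hi' | rfl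
    · obtain ⟨h1, h2, h3, h4⟩ := h i hi'
      rw [Function.update_of_ne hi'.ne, Function.update_of_ne hi'.ne]
      refine ⟨h1, h2, fun j hj => ?_, h4⟩
      rw [Function.update_of_ne (hj.trans hi').ne]
      exact h3 j hj
    · rw [Function.update_self, Function.update_self]
      refine ⟨by simpa using hz, hv, fun j hj => ?_, hzv⟩
      rw [Function.update_of_ne hj.ne]
      exact hvf j hj

/-- The corner simplex of `ℝ^d`, without its boundary. -/
def openCorner (d : ℕ) : Set (EuclideanSpace ℝ (Fin d)) :=
  {w | (∀ i, 0 < w i) ∧ ∑ i, w i < 1}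

theorem volume_openCorner_pos (d : ℕ) : 0 < volume (openCorner d) := by
  have ho : IsOpen (openCorner d) := by
    have h1 : IsOpen {w : EuclideanSpace ℝ (Fin d) | ∀ i, 0 < w i} := by
      have h2 : {w : EuclideanSpace ℝ (Fin d) | ∀ i, 0 < w i} = ⋂ i, {w | 0 < w i} := by
        ext w
        simp
      rw [h2]
      exact isOpen_iInter_of_finite fun i =>
        isOpen_lt continuous_const (PiLp.continuous_apply 2 (fun _ : Fin d => ℝ) i)
    exact h1.inter (isOpen_lt (continuous_finsetSum _ fun i _ =>
      PiLp.continuous_apply 2 (fun _ : Fin d => ℝ) i) continuous_const)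
  refine ho.measure_pos volume ⟨WithLp.toLp 2 fun _ => 1 / ((d : ℝ) + 1), fun i => ?_, ?_⟩
  · change 0 < 1 / ((d : ℝ) + 1)
    positivity
  · simp only [Finset.sum_const, Finset.card_univ, Fintype.card_fin, nsmul_eq_mul]
    rw [mul_one_div, div_lt_one (by positivity)]
    linarith

/-- Convex sets whose width is at least `ε` in every direction have volume bounded below. -/
theorem exists_volume_lower_bound_of_width (d : ℕ) (hd : 0 < d) {ε : ℝ} (hε : 0 < ε) :
    ∃ c : ℝ, 0 < c ∧ ∀ K : Set (EuclideanSpace ℝ (Fin d)), Convex ℝ K →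
      (∀ e : EuclideanSpace ℝ (Fin d), ‖e‖ = 1 → ∃ x ∈ K, ∃ y ∈ K, ε ≤ ⟪e, x - y⟫) →
      ENNReal.ofReal c ≤ volume K := by
  have hδ : 0 < (ε / 2) ^ d / (d.factorial : ℝ) := by positivity
  have hpos : 0 < ENNReal.ofReal ((ε / 2) ^ d / (d.factorial : ℝ)) * volume (openCorner d) :=
    ENNReal.mul_pos (by simpa using hδ) (volume_openCorner_pos d).ne'
  obtain ⟨c, hc0, hc⟩ := ENNReal.lt_iff_exists_nnreal_btwn.1 hpos
  refine ⟨c, by exact_mod_cast hc0, fun K hconv hK => ?_⟩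
  rw [ENNReal.ofReal_coe_nnreal]
  refine hc.le.trans ?_
  have hfr : Module.finrank ℝ (EuclideanSpace ℝ (Fin d)) = d := by simp
  obtain ⟨x₀, hx₀⟩ : K.Nonempty := by
    obtain ⟨x, hx, -⟩ := hK (EuclideanSpace.single ⟨0, hd⟩ 1) (by simp)
    exact ⟨x, hx⟩
  obtain ⟨f, e, hfe⟩ := exists_triangular_system x₀ hK d hfr.ge
  set F : Matrix (Fin d) (Fin d) ℝ := fun i j => f j i with hF
  set B : Matrix (Fin d) (Fin d) ℝ := fun i j => e i j with hB
  have hBF : ∀ i j, (B * F) i j = ⟪e i, f j⟫ := by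
    intro i j
    rw [Matrix.mul_apply, PiLp.inner_apply]
    exact Finset.sum_congr rfl fun l _ => by simp [hF, hB, mul_comm]
  have hdet : (B * F).det = ∏ i : Fin d, ⟪e i, f i⟫ := by
    rw [Matrix.det_of_isUpperTriangular]
    · exact Finset.prod_congr rfl fun i _ => hBF i i
    · intro i j hij
      rw [hBF]
      exact (hfe i i.2).2.2.1 j hij
  have hlow : (ε / 2) ^ d ≤ |(B * F).det| := by
    rw [hdet, Finset.abs_prod]
    calc (ε / 2) ^ d = ∏ _i : Fin d, (ε / 2) := by
          rw [Finset.prod_const, Finset.card_univ, Fintype.card_fin]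
      _ ≤ _ := Finset.prod_le_prod (fun _ _ => by positivity) fun i _ => (hfe i i.2).2.2.2
  have hBdet : |B.det| ≤ d.factorial := by
    have h := Matrix.det_le (A := B) (abv := AbsoluteValue.abs) (x := 1) fun i j => by
      have := PiLp.norm_apply_le (e i) j
      rw [(hfe i i.2).2.1] at this
      simpa using this
    simpa using h
  have hFdet : (ε / 2) ^ d / (d.factorial : ℝ) ≤ |F.det| := by
    rw [div_le_iff₀ (by positivity)]
    rw [Matrix.det_mul, abs_mul] at hlow
    nlinarith [abs_nonneg F.det]
  set L := Matrix.toLin (EuclideanSpace.basisFun (Fin d) ℝ).toBasis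
    (EuclideanSpace.basisFun (Fin d) ℝ).toBasis F with hL
  have hLdet : LinearMap.det L = F.det := LinearMap.det_toLin _ _
  have hLw : ∀ w, L w = ∑ j : Fin d, w j • f j := by
    intro w
    ext i
    rw [hL, Matrix.toLin_apply]
    simp [Matrix.mulVec, dotProduct, hF, mul_comm, Pi.single_apply]
  have hsub : (fun x => x₀ + x) '' (L '' openCorner d) ⊆ K := by
    rintro _ ⟨_, ⟨w, ⟨hw0, hw1⟩, rfl⟩, rfl⟩
    have h := hconv.sum_mem (t := Finset.univ)
      (w := fun o : Option (Fin d) => o.elim (1 - ∑ i, w i) (fun j => w j))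
      (z := fun o : Option (Fin d) => o.elim x₀ (fun j => x₀ + f j))
      (by rintro (_ | j) -
          · simpa using hw1.le
          · exact (hw0 j).le)
      (by simp [Fintype.sum_option])
      (by rintro (_ | j) -
          · exact hx₀
          · exact (hfe j j.2).1)
    simp only [Fintype.sum_option, Option.elim_none, Option.elim_some, smul_add,
      Finset.sum_add_distrib, ← Finset.sum_smul, sub_smul, one_smul] at h
    simp only [hLw]
    convert h using 1
    abel
  calc _ ≤ ENNReal.ofReal |LinearMap.det L| * volume (openCorner d) := by
        rw [hLdet]; gcongr
    _ = volume (L '' openCorner d) := (Measure.addHaar_image_linearMap _ _ _).symm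
    _ = volume ((fun x => x₀ + x) '' (L '' openCorner d)) := by
        rw [image_add_left, measure_preimage_add]
    _ ≤ volume K := measure_mono hsub

theorem Etop_last (n : ℕ) : Etop n (Fin.last n) = 1 := by simp [Etop]

theorem norm_Etop (n : ℕ) : ‖Etop n‖ = 1 := by simp [Etop]

theorem inner_Etop {n : ℕ} (x : V n) : ⟪Etop n, x⟫ = x (Fin.last n) := by
  rw [Etop, EuclideanSpace.inner_single_left]
  simp

/-- The convex cone of directions whose angle with the vertical has cosine greater than `c`. -/
def openCone (n : ℕ) (c : ℝ) : Set (V n) := {x | c * ‖x‖ < x (Fin.last n)}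

/-- The closure of `openCone`, without the origin. -/
def wideCone (n : ℕ) (c : ℝ) : Set (V n) := {x | x ≠ 0 ∧ c * ‖x‖ ≤ x (Fin.last n)}

theorem isOpen_openCone (n : ℕ) (c : ℝ) : IsOpen (openCone n c) :=
  isOpen_lt (by fun_prop) (PiLp.continuous_apply 2 (fun _ : Fin (n + 1) => ℝ) _)

theorem convex_openCone {n : ℕ} {c : ℝ} (hc : 0 ≤ c) : Convex ℝ (openCone n c) := by
  intro x hx y hy a b ha hb hab
  change c * ‖a • x + b • y‖ < a * x (Fin.last n) + b * y (Fin.last n)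
  have h : ‖a • x + b • y‖ ≤ a * ‖x‖ + b * ‖y‖ := by
    refine (norm_add_le _ _).trans_eq ?_
    rw [norm_smul, norm_smul, Real.norm_of_nonneg ha, Real.norm_of_nonneg hb]
  have h' := mul_le_mul_of_nonneg_left h hc
  have hx' : c * ‖x‖ < x (Fin.last n) := hx
  have hy' : c * ‖y‖ < y (Fin.last n) := hy
  rcases ha.eq_or_lt with rfl | ha'
  · have : b = 1 := by linarith
    subst this
    linarith
  · nlinarith [mul_le_mul_of_nonneg_left hy'.le hb, mul_lt_mul_of_pos_left hx' ha']

theorem openCone_subset_wideCone {n : ℕ} {c : ℝ} : openCone n c ⊆ wideCone n c := by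
  intro x hx
  refine ⟨?_, le_of_lt hx⟩
  rintro rfl
  simp [openCone] at hx

theorem smul_mem_openCone {n : ℕ} {c l : ℝ} (hl : 0 < l) {x : V n} (hx : x ∈ openCone n c) :
    l • x ∈ openCone n c := by
  change c * ‖l • x‖ < l * x (Fin.last n)
  rw [norm_smul, Real.norm_of_nonneg hl.le]
  have := mul_lt_mul_of_pos_left (show c * ‖x‖ < x (Fin.last n) from hx) hl
  linarith

theorem add_smul_Etop_mem_openCone {n : ℕ} {c t : ℝ} (hc : 0 ≤ c) (hc1 : c < 1) (ht : 0 < t)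
    {x : V n} (hx : x ∈ wideCone n c) : x + t • Etop n ∈ openCone n c := by
  change c * ‖x + t • Etop n‖ < x (Fin.last n) + t * Etop n (Fin.last n)
  rw [Etop_last]
  have h : ‖x + t • Etop n‖ ≤ ‖x‖ + t := by
    refine (norm_add_le _ _).trans_eq ?_
    rw [norm_smul, norm_Etop, Real.norm_of_nonneg ht.le, mul_one]
  have h' := mul_le_mul_of_nonneg_left h hc
  nlinarith [hx.2]

theorem Etop_mem_openCone {n : ℕ} {c : ℝ} (hc1 : c < 1) : Etop n ∈ openCone n c := by
  change c * ‖Etop n‖ < Etop n (Fin.last n)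
  rw [norm_Etop, Etop_last]
  linarith

theorem nonpos_of_isLocalMax_of_hasDerivAt {g g' : ℝ → ℝ} {b : ℝ} (hmax : IsLocalMax g 0)
    (hg : ∀ᶠ t in nhds 0, HasDerivAt g (g' t) t) (hg' : HasDerivAt g' b 0) : b ≤ 0 := by
  by_contra! hb
  have hd : deriv g =ᶠ[nhds 0] g' := hg.mono fun t ht => ht.deriv
  have h2 : deriv (deriv g) 0 = b := by rw [hd.deriv_eq, hg'.deriv]
  have hmin : IsLocalMin g 0 :=
    isLocalMin_of_deriv_deriv_pos (by rw [h2]; exact hb) hmax.deriv_eq_zero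
      hg.self_of_nhds.continuousAt
  have hconst : g =ᶠ[nhds 0] fun _ => g 0 := by
    filter_upwards [hmax, hmin] with t h1 h2 using le_antisymm h1 h2
  have : deriv (deriv g) 0 = 0 := by
    rw [hconst.deriv.deriv_eq]
    simp
  linarith

/-- A positively one-homogeneous function on the cone over a spherical cap, convex there, with the
capillary boundary condition, uniformly bounded first and second derivatives on the cap, and
Laplacian at least `δ` on the cap. -/
structure IsCapillaryPotential (n : ℕ) (c A δ : ℝ) (G : V n → ℝ) : Prop where
  smooth : ∀ x ∈ wideCone n c, ContDiffAt ℝ 3 G x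
  hom : ∀ l : ℝ, 0 < l → ∀ x ∈ wideCone n c, G (l • x) = l * G x
  robin : ∀ u ∈ wideCone n c, ‖u‖ = 1 → u (Fin.last n) = c → fderiv ℝ G u (Etop n) = 0
  psd : ∀ u ∈ wideCone n c, ‖u‖ = 1 → ∀ v, 0 ≤ fderiv ℝ (fderiv ℝ G) u v v
  grad_le : ∀ u ∈ wideCone n c, ‖u‖ = 1 → ‖fderiv ℝ G u‖ ≤ A
  hess_le : ∀ u ∈ wideCone n c, ‖u‖ = 1 → ‖fderiv ℝ (fderiv ℝ G) u‖ ≤ A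
  le_laplacian : ∀ u ∈ wideCone n c, ‖u‖ = 1 →
    δ ≤ ∑ i, fderiv ℝ (fderiv ℝ G) u (EuclideanSpace.single i 1) (EuclideanSpace.single i 1)

namespace IsCapillaryPotential

variable {n : ℕ} {c A δ : ℝ} {G : V n → ℝ}

theorem differentiableAt (h : IsCapillaryPotential n c A δ G) {x : V n} (hx : x ∈ wideCone n c) :
    DifferentiableAt ℝ G x :=
  (h.smooth x hx).differentiableAt (by norm_num)

theorem differentiableAt_fderiv (h : IsCapillaryPotential n c A δ G) {x : V n}
    (hx : x ∈ wideCone n c) : DifferentiableAt ℝ (fderiv ℝ G) x :=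
  ((h.smooth x hx).fderiv_right (m := 2) (by norm_num)).differentiableAt (by norm_num)

theorem hasDerivAt_line (h : IsCapillaryPotential n c A δ G) {x v : V n} {t : ℝ}
    (hx : x + t • v ∈ wideCone n c) :
    HasDerivAt (fun s : ℝ => G (x + s • v)) (fderiv ℝ G (x + t • v) v) t := by
  have h1 : HasDerivAt (fun s : ℝ => x + s • v) v t := by
    simpa using ((hasDerivAt_id t).smul_const v).const_add x
  exact (h.differentiableAt hx).hasFDerivAt.comp_hasDerivAt t h1

theorem hasDerivAt_fderiv_line (h : IsCapillaryPotential n c A δ G) {x v : V n} {t : ℝ}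
    (hx : x + t • v ∈ wideCone n c) :
    HasDerivAt (fun s : ℝ => fderiv ℝ G (x + s • v) v)
      (fderiv ℝ (fderiv ℝ G) (x + t • v) v v) t := by
  have h1 : HasDerivAt (fun s : ℝ => x + s • v) v t := by
    simpa using ((hasDerivAt_id t).smul_const v).const_add x
  have h2 : HasDerivAt (fun s : ℝ => fderiv ℝ G (x + s • v))
      (fderiv ℝ (fderiv ℝ G) (x + t • v) v) t :=
    (h.differentiableAt_fderiv hx).hasFDerivAt.comp_hasDerivAt t h1
  simpa using h2.clm_apply (hasDerivAt_const t v)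

theorem fderiv_smul (h : IsCapillaryPotential n c A δ G) {l : ℝ} (hl : 0 < l) {x : V n}
    (hx : x ∈ openCone n c) : fderiv ℝ G (l • x) = fderiv ℝ G x := by
  have h1 : (fun y => G (l • y)) =ᶠ[nhds x] fun y => l * G y := by
    filter_upwards [(isOpen_openCone n c).mem_nhds hx] with y hy using
      h.hom l hl y (openCone_subset_wideCone hy)
  have h2 := h1.fderiv_eq (𝕜 := ℝ)
  rw [fderiv_comp_smul (f := G) l, fderiv_const_mul (h.differentiableAt (openCone_subset_wideCone hx))] at h2
  exact smul_right_injective _ hl.ne' h2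

theorem smul_hess_smul (h : IsCapillaryPotential n c A δ G) {l : ℝ} (hl : 0 < l) {x : V n}
    (hx : x ∈ openCone n c) :
    l • fderiv ℝ (fderiv ℝ G) (l • x) = fderiv ℝ (fderiv ℝ G) x := by
  have h1 : (fun y => fderiv ℝ G (l • y)) =ᶠ[nhds x] fderiv ℝ G := by
    filter_upwards [(isOpen_openCone n c).mem_nhds hx] with y hy using h.fderiv_smul hl hy
  have h2 := h1.fderiv_eq (𝕜 := ℝ)
  rwa [fderiv_comp_smul (f := fderiv ℝ G) l] at h2

theorem hess_eq (h : IsCapillaryPotential n c A δ G) {x : V n} (hx : x ∈ openCone n c) :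
    fderiv ℝ (fderiv ℝ G) x = ‖x‖⁻¹ • fderiv ℝ (fderiv ℝ G) (‖x‖⁻¹ • x) :=
  (h.smul_hess_smul (inv_pos.2 (norm_pos_iff.2 (openCone_subset_wideCone hx).1)) hx).symm

theorem normalize_mem {x : V n} (hx : x ∈ openCone n c) :
    ‖x‖⁻¹ • x ∈ openCone n c ∧ ‖‖x‖⁻¹ • x‖ = 1 := by
  have hx0 : x ≠ 0 := (openCone_subset_wideCone hx).1
  refine ⟨smul_mem_openCone (inv_pos.2 (norm_pos_iff.2 hx0)) hx, ?_⟩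
  rw [norm_smul, norm_inv, norm_norm, inv_mul_cancel₀ (norm_ne_zero_iff.2 hx0)]

theorem hess_nonneg (h : IsCapillaryPotential n c A δ G) {x : V n} (hx : x ∈ openCone n c)
    (v : V n) : 0 ≤ fderiv ℝ (fderiv ℝ G) x v v := by
  rw [h.hess_eq hx]
  obtain ⟨h1, h2⟩ := normalize_mem hx
  exact mul_nonneg (inv_nonneg.2 (norm_nonneg x))
    (h.psd _ (openCone_subset_wideCone h1) h2 v)

set_option maxSynthPendingDepth 3 in
theorem norm_hess_le (h : IsCapillaryPotential n c A δ G) {x : V n} (hx : x ∈ openCone n c) :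
    ‖fderiv ℝ (fderiv ℝ G) x‖ ≤ ‖x‖⁻¹ * A := by
  rw [h.hess_eq hx, norm_smul, norm_inv, norm_norm]
  obtain ⟨h1, h2⟩ := normalize_mem hx
  exact mul_le_mul_of_nonneg_left (h.hess_le _ (openCone_subset_wideCone h1) h2) (by positivity)

theorem laplacian_ge (h : IsCapillaryPotential n c A δ G) {x : V n} (hx : x ∈ openCone n c) :
    ‖x‖⁻¹ * δ ≤ ∑ i, fderiv ℝ (fderiv ℝ G) x (EuclideanSpace.single i 1)
      (EuclideanSpace.single i 1) := by
  obtain ⟨h1, h2⟩ := normalize_mem hx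
  have h3 := mul_le_mul_of_nonneg_left (h.le_laplacian _ (openCone_subset_wideCone h1) h2)
    (inv_nonneg.2 (norm_nonneg x))
  rw [Finset.mul_sum] at h3
  rw [h.hess_eq hx]
  exact h3

theorem fderiv_self (h : IsCapillaryPotential n c A δ G) {x : V n} (hx : x ∈ wideCone n c) :
    fderiv ℝ G x x = G x := by
  have h1 : HasDerivAt (fun s : ℝ => G (0 + s • x)) (fderiv ℝ G (0 + (1 : ℝ) • x) x) 1 :=
    h.hasDerivAt_line (by simpa using hx)
  simp only [zero_add, one_smul] at h1
  have h2 : HasDerivAt (fun s : ℝ => s * G x) (G x) 1 := by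
    simpa using (hasDerivAt_id (1 : ℝ)).mul_const (G x)
  refine h1.unique (h2.congr_of_eventuallyEq ?_)
  filter_upwards [lt_mem_nhds (zero_lt_one : (0 : ℝ) < 1)] with s hs using h.hom s hs x hx

theorem grad_ineq (hc : 0 ≤ c) (h : IsCapillaryPotential n c A δ G) {x y : V n}
    (hx : x ∈ openCone n c) (hy : y ∈ openCone n c) :
    G y + fderiv ℝ G y (x - y) ≤ G x := by
  have hmem : ∀ t ∈ Icc (0 : ℝ) 1, y + t • (x - y) ∈ openCone n c := fun t ht =>
    (convex_openCone hc).add_smul_sub_mem hy hx ht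
  have hw : ∀ t ∈ Icc (0 : ℝ) 1, y + t • (x - y) ∈ wideCone n c := fun t ht =>
    openCone_subset_wideCone (hmem t ht)
  have hd : ∀ t ∈ Icc (0 : ℝ) 1, HasDerivAt (fun s : ℝ => G (y + s • (x - y)))
      (fderiv ℝ G (y + t • (x - y)) (x - y)) t := fun t ht => h.hasDerivAt_line (hw t ht)
  have hd2 : ∀ t ∈ Icc (0 : ℝ) 1, HasDerivAt (fun s : ℝ => fderiv ℝ G (y + s • (x - y)) (x - y))
      (fderiv ℝ (fderiv ℝ G) (y + t • (x - y)) (x - y) (x - y)) t :=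
    fun t ht => h.hasDerivAt_fderiv_line (hw t ht)
  have hmono : MonotoneOn (fun s : ℝ => fderiv ℝ G (y + s • (x - y)) (x - y)) (Icc 0 1) := by
    refine monotoneOn_of_deriv_nonneg (convex_Icc 0 1)
      (fun t ht => (hd2 t ht).continuousAt.continuousWithinAt) (fun t ht => ?_) fun t ht => ?_
    · exact (hd2 t (interior_subset ht)).differentiableAt.differentiableWithinAt
    · rw [(hd2 t (interior_subset ht)).deriv]
      exact h.hess_nonneg (hmem t (interior_subset ht)) _
  obtain ⟨ξ, hξ, hslope⟩ := exists_hasDerivAt_eq_slope (fun s : ℝ => G (y + s • (x - y)))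
    (fun s : ℝ => fderiv ℝ G (y + s • (x - y)) (x - y)) zero_lt_one
    (fun t ht => (hd t ht).continuousAt.continuousWithinAt) fun t ht => hd t (Ioo_subset_Icc_self ht)
  have h0 := hmono (left_mem_Icc.2 zero_le_one) (Ioo_subset_Icc_self hξ) hξ.1.le
  simp only [zero_smul, add_zero, one_smul, add_sub_cancel, sub_zero, div_one] at h0 hslope
  linarith

theorem tendsto_lift (x : V n) :
    Filter.Tendsto (fun t : ℝ => x + t • Etop n) (nhdsWithin 0 (Ioi 0)) (nhds x) := by
  have h : Continuous fun t : ℝ => x + t • Etop n := by fun_prop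
  have h' := (h.tendsto 0).mono_left (nhdsWithin_le_nhds (s := Ioi 0))
  simpa using h'

theorem eventually_lift_mem (hc : 0 ≤ c) (hc1 : c < 1) {x : V n} (hx : x ∈ wideCone n c) :
    ∀ᶠ t in nhdsWithin (0 : ℝ) (Ioi 0), x + t • Etop n ∈ openCone n c := by
  filter_upwards [self_mem_nhdsWithin] with t ht using add_smul_Etop_mem_openCone hc hc1 ht hx

/-- The gradient image lies below the supporting hyperplanes of `G`. -/
theorem fderiv_le (hc : 0 ≤ c) (hc1 : c < 1) (h : IsCapillaryPotential n c A δ G) {x y : V n}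
    (hx : x ∈ wideCone n c) (hy : y ∈ wideCone n c) : fderiv ℝ G y x ≤ G x := by
  have hX := (h.differentiableAt hx).continuousAt.tendsto.comp (tendsto_lift x)
  have hY : Filter.Tendsto (fun t : ℝ => fderiv ℝ G (y + t • Etop n) (x + t • Etop n))
      (nhdsWithin 0 (Ioi 0)) (nhds (fderiv ℝ G y x)) :=
    (isBoundedBilinearMap_apply.continuous.tendsto (fderiv ℝ G y, x)).comp
      (((h.differentiableAt_fderiv hy).continuousAt.tendsto.comp (tendsto_lift y)).prodMk_nhds
        (tendsto_lift x))
  refine le_of_tendsto_of_tendsto hY hX ?_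
  filter_upwards [eventually_lift_mem hc hc1 hx, eventually_lift_mem hc hc1 hy] with t h1 h2
  have h3 := h.grad_ineq hc h1 h2
  rw [map_sub, h.fderiv_self (openCone_subset_wideCone h2)] at h3
  simp only [Function.comp_apply]
  linarith

theorem norm_fderiv_sub_le (hc : 0 ≤ c) (hc1 : c < 1) (hA : 0 ≤ A)
    (h : IsCapillaryPotential n c A δ G) {e x : V n} (he : e ∈ wideCone n c) (he1 : ‖e‖ = 1)
    (hx : x ∈ openCone n c) (hxe : ‖x - e‖ < 1 / 2) :
    ‖fderiv ℝ G x - fderiv ℝ G e‖ ≤ 2 * A * ‖x - e‖ := by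
  have hball : ∀ᶠ t in nhdsWithin (0 : ℝ) (Ioi 0), e + t • Etop n ∈ Metric.ball e (1 / 2) :=
    (tendsto_lift e).eventually (Metric.ball_mem_nhds e (by norm_num))
  have hL := (((h.differentiableAt_fderiv he).continuousAt.tendsto.comp
    (tendsto_lift e)).const_sub (fderiv ℝ G x)).norm
  have hR := (((tendsto_lift e).const_sub x).norm).const_mul (2 * A)
  refine le_of_tendsto_of_tendsto hL hR ?_
  filter_upwards [eventually_lift_mem hc hc1 he, hball] with t h1 h2
  have hxb : x ∈ Metric.ball e (1 / 2) := by rwa [mem_ball_iff_norm]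
  refine Convex.norm_image_sub_le_of_norm_fderiv_le (𝕜 := ℝ)
    (s := openCone n c ∩ Metric.ball e (1 / 2))
    (fun z hz => h.differentiableAt_fderiv (openCone_subset_wideCone hz.1)) (fun z hz => ?_)
    ((convex_openCone hc).inter (convex_ball e _)) ⟨h1, h2⟩ ⟨hx, hxb⟩
  refine (h.norm_hess_le hz.1).trans (mul_le_mul_of_nonneg_right ?_ hA)
  have hz2 := mem_ball_iff_norm.1 hz.2
  have hz3 : 1 / 2 ≤ ‖z‖ := by
    have := norm_sub_norm_le e z
    rw [he1, norm_sub_rev] at this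
    linarith
  exact (inv_anti₀ (by norm_num) hz3).trans (by norm_num)

/-- Quadratic upper bound for `G` near a point of the cap. -/
theorem le_fderiv_add_sq (hc : 0 ≤ c) (hc1 : c < 1) (hA : 0 ≤ A)
    (h : IsCapillaryPotential n c A δ G) {e x : V n} (he : e ∈ wideCone n c) (he1 : ‖e‖ = 1)
    (hx : x ∈ openCone n c) (hxe : ‖x - e‖ < 1 / 2) :
    G x ≤ fderiv ℝ G e x + 2 * A * ‖x - e‖ ^ 2 := by
  have h1 := h.fderiv_le hc hc1 he (openCone_subset_wideCone hx)
  have h2 := h.norm_fderiv_sub_le hc hc1 hA he he1 hx hxe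
  have h3 := (le_abs_self _).trans ((fderiv ℝ G x - fderiv ℝ G e).le_opNorm (x - e))
  have h4 := mul_le_mul_of_nonneg_right h2 (norm_nonneg (x - e))
  have h5 := h.fderiv_self (openCone_subset_wideCone hx)
  have h6 := h.fderiv_self he
  simp only [_root_.sub_apply, map_sub] at h3
  nlinarith

end IsCapillaryPotential

theorem norm_sq_horizontal_add {n : ℕ} {v : V n} (hv : ‖v‖ = 1) (hv0 : v (Fin.last n) = 0)
    (a b : ℝ) : ‖a • v + b • Etop n‖ ^ 2 = a ^ 2 + b ^ 2 := by
  rw [norm_add_sq_real, inner_smul_left, inner_smul_right, real_inner_comm, inner_Etop, hv0,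
    norm_smul, norm_smul, hv, norm_Etop]
  simp

/-- Cylindrical coordinates. -/
theorem exists_horizontal_decomposition {n : ℕ} (hn : 1 ≤ n) (u : V n) :
    ∃ v : V n, ∃ r : ℝ, ‖v‖ = 1 ∧ v (Fin.last n) = 0 ∧ 0 ≤ r ∧
      u = r • v + u (Fin.last n) • Etop n ∧ r ^ 2 + u (Fin.last n) ^ 2 = ‖u‖ ^ 2 := by
  suffices h : ∃ v : V n, ∃ r : ℝ, ‖v‖ = 1 ∧ v (Fin.last n) = 0 ∧ 0 ≤ r ∧
      u = r • v + u (Fin.last n) • Etop n by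
    obtain ⟨v, r, hv, hv0, hr, hu⟩ := h
    refine ⟨v, r, hv, hv0, hr, hu, ?_⟩
    rw [← norm_sq_horizontal_add hv hv0, ← hu]
  set w : V n := u - u (Fin.last n) • Etop n with hw
  have hw0 : w (Fin.last n) = 0 := by
    change u (Fin.last n) - u (Fin.last n) * Etop n (Fin.last n) = 0
    rw [Etop_last, mul_one, sub_self]
  by_cases h : w = 0
  · have hne : (0 : Fin (n + 1)) ≠ Fin.last n := by
      intro h0
      have := congrArg Fin.val h0
      simp at this
      omega
    refine ⟨EuclideanSpace.single 0 1, 0, by simp, by simp [hne.symm], le_rfl, ?_⟩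
    rw [zero_smul, zero_add]
    exact sub_eq_zero.1 h
  · have hne : ‖w‖ ≠ 0 := norm_ne_zero_iff.2 h
    refine ⟨‖w‖⁻¹ • w, ‖w‖, ?_, ?_, norm_nonneg w, ?_⟩
    · rw [norm_smul, norm_inv, norm_norm, inv_mul_cancel₀ hne]
    · change ‖w‖⁻¹ * w (Fin.last n) = 0
      rw [hw0, mul_zero]
    · rw [smul_smul, mul_inv_cancel₀ hne, one_smul, hw, sub_add_cancel]

theorem boundary_point {n : ℕ} {c : ℝ} (hc : 0 ≤ c) (hc1 : c < 1) {v : V n} (hv : ‖v‖ = 1)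
    (hv0 : v (Fin.last n) = 0) :
    √(1 - c ^ 2) • v + c • Etop n ∈ wideCone n c ∧ ‖√(1 - c ^ 2) • v + c • Etop n‖ = 1 ∧
      (√(1 - c ^ 2) • v + c • Etop n) (Fin.last n) = c := by
  have hs : 0 ≤ 1 - c ^ 2 := by nlinarith
  have h1 : ‖√(1 - c ^ 2) • v + c • Etop n‖ = 1 := by
    have h := norm_sq_horizontal_add hv hv0 (√(1 - c ^ 2)) c
    rw [Real.sq_sqrt hs, sub_add_cancel] at h
    exact (pow_eq_one_iff_of_nonneg (norm_nonneg _) two_ne_zero).1 h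
  have h2 : (√(1 - c ^ 2) • v + c • Etop n) (Fin.last n) = c := by
    change √(1 - c ^ 2) * v (Fin.last n) + c * Etop n (Fin.last n) = c
    rw [hv0, Etop_last]
    ring
  refine ⟨⟨fun h => ?_, ?_⟩, h1, h2⟩
  · rw [h, norm_zero] at h1
    exact zero_ne_one h1
  · rw [h1, h2, mul_one]

theorem exists_boundary_decomposition {n : ℕ} (hn : 1 ≤ n) {c : ℝ} (hc : 0 ≤ c) (hc1 : c < 1)
    {u : V n} (hu : u ∈ wideCone n c) (hu1 : ‖u‖ = 1) :
    ∃ u₀ ∈ wideCone n c, ‖u₀‖ = 1 ∧ u₀ (Fin.last n) = c ∧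
      ∃ a b : ℝ, 0 ≤ a ∧ 0 ≤ b ∧ u = a • u₀ + b • Etop n := by
  obtain ⟨v, r, hv, hv0, hr, hur, hsq⟩ := exists_horizontal_decomposition hn u
  obtain ⟨h1, h2, h3⟩ := boundary_point hc hc1 hv hv0
  have hlast : c ≤ u (Fin.last n) := by simpa [hu1] using hu.2
  have hs : 0 < √(1 - c ^ 2) := Real.sqrt_pos.2 (by nlinarith)
  have hrs : r ≤ √(1 - c ^ 2) := by
    refine Real.le_sqrt_of_sq_le ?_
    rw [hu1] at hsq
    nlinarith
  have ha : r / √(1 - c ^ 2) ≤ 1 := (div_le_one hs).2 hrs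
  refine ⟨_, h1, h2, h3, r / √(1 - c ^ 2), u (Fin.last n) - r / √(1 - c ^ 2) * c, by positivity,
    by nlinarith, ?_⟩
  conv_lhs => rw [hur]
  rw [smul_add, smul_smul, smul_smul, div_mul_cancel₀ _ hs.ne', sub_smul]
  abel

namespace IsCapillaryPotential

variable {n : ℕ} {c A δ : ℝ} {G : V n → ℝ}

theorem height_nonneg (hn : 1 ≤ n) (hc : 0 ≤ c) (hc1 : c < 1)
    (h : IsCapillaryPotential n c A δ G) {u : V n} (hu : u ∈ wideCone n c) (hu1 : ‖u‖ = 1) :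
    0 ≤ fderiv ℝ G u (Etop n) := by
  obtain ⟨u₀, hm, h1, h2, a, b, ha, hb, hab⟩ := exists_boundary_decomposition hn hc hc1 hu hu1
  have hz := h.robin u₀ hm h1 h2
  rcases hb.eq_or_lt with rfl | hb
  · rw [zero_smul, add_zero] at hab
    have : a = 1 := by
      rw [hab, norm_smul, h1, mul_one, Real.norm_of_nonneg ha] at hu1
      exact hu1
    rw [hab, this, one_smul, hz]
  · have i1 := h.fderiv_le hc hc1 hm hu
    have i2 := h.fderiv_le hc hc1 hu hm
    rw [← h.fderiv_self hm] at i1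
    rw [← h.fderiv_self hu] at i2
    have e1 : ∀ L : V n →L[ℝ] ℝ, L u = a * L u₀ + b * L (Etop n) := by
      intro L
      conv_lhs => rw [hab]
      simp
    rw [e1, e1 (fderiv ℝ G u), hz] at i2
    have i3 := mul_le_mul_of_nonneg_left i1 ha
    exact le_of_mul_le_mul_left (by linarith) hb

theorem norm_gradient_le (h : IsCapillaryPotential n c A δ G) {u : V n} (hu : u ∈ wideCone n c)
    (hu1 : ‖u‖ = 1) : ‖gradient G u‖ ≤ A := by
  rw [gradient, LinearIsometryEquiv.norm_map]
  exact h.grad_le u hu hu1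

/-- If the gradient image is thin in a direction of the cap, it is small. -/
theorem exists_thin_bound (hn : 1 ≤ n) (hc : 0 ≤ c) (hc1 : c < 1) (hA : 0 < A) {e : V n}
    (he : e ∈ wideCone n c) (he1 : ‖e‖ = 1) {η : ℝ} (hη : 0 < η) :
    ∃ ε : ℝ, 0 < ε ∧ ∀ δ G, IsCapillaryPotential n c A δ G →
      (∀ u ∈ wideCone n c, ‖u‖ = 1 → fderiv ℝ G e e - fderiv ℝ G u e ≤ ε) →
      ∀ u ∈ wideCone n c, ‖u‖ = 1 → ‖gradient G u - gradient G e‖ ≤ η := by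
  have hc1' : 0 < 1 - c := by linarith
  obtain ⟨M, hM0, hM⟩ : ∃ M : ℝ, 0 < M ∧ c * (2 * A ^ 2 + M) < M := by
    refine ⟨(2 * A ^ 2 + 1) / (1 - c), by positivity, ?_⟩
    have : (2 * A ^ 2 + 1) / (1 - c) * (1 - c) = 2 * A ^ 2 + 1 := div_mul_cancel₀ _ hc1'.ne'
    nlinarith [mul_le_mul_of_nonneg_left hc1.le (sq_nonneg A)]
  set B := 2 * A + M with hB
  set D := 2 * A * B ^ 2 + 2 * A * M with hD
  have hB0 : 0 < B := by positivity
  have hD0 : 0 < D := by positivity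
  have hlast : c ≤ e (Fin.last n) := by simpa [he1] using he.2
  obtain ⟨m, hm0, hm⟩ : ∃ m : ℝ, 0 < m ∧ (e (Fin.last n) ≠ c → m ≤ e (Fin.last n) - c) := by
    by_cases hec : e (Fin.last n) = c
    · exact ⟨1, one_pos, fun hne => absurd hec hne⟩
    · exact ⟨_, sub_pos.2 (lt_of_le_of_ne hlast (Ne.symm hec)), fun _ => le_rfl⟩
  obtain ⟨t, ht0, ht1, htB, htm, htD⟩ : ∃ t : ℝ, 0 < t ∧ t ≤ 1 ∧ t * B < 1 / 2 ∧
      t * (2 * A) ≤ m ∧ t * D ≤ η ^ 2 / 2 := by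
    refine ⟨min (min 1 (1 / (4 * B))) (min (m / (2 * A)) (η ^ 2 / 2 / D)), by positivity,
      (min_le_left _ _).trans (min_le_left _ _), ?_, ?_, ?_⟩
    · have h1 := (min_le_left (min 1 (1 / (4 * B))) (min (m / (2 * A)) (η ^ 2 / 2 / D))).trans
        (min_le_right _ _)
      rw [le_div_iff₀ (by positivity)] at h1
      linarith
    · have h1 := (min_le_right (min 1 (1 / (4 * B))) (min (m / (2 * A)) (η ^ 2 / 2 / D))).trans
        (min_le_left _ _)
      rwa [le_div_iff₀ (by positivity)] at h1
    · have h1 := (min_le_right (min 1 (1 / (4 * B))) (min (m / (2 * A)) (η ^ 2 / 2 / D))).trans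
        (min_le_right _ _)
      rwa [le_div_iff₀ (by positivity)] at h1
  refine ⟨t * (η ^ 2 / 2), by positivity, fun δ G h hthin u hu hu1 => ?_⟩
  set q := gradient G u - gradient G e with hq
  have hqv : ∀ v, ⟪q, v⟫ = fderiv ℝ G u v - fderiv ℝ G e v := fun v => by
    rw [hq, inner_sub_left, inner_gradient_left, inner_gradient_left]
  have hqA : ‖q‖ ≤ 2 * A := by
    refine (norm_sub_le _ _).trans ?_
    linarith [h.norm_gradient_le hu hu1, h.norm_gradient_le he he1]
  have hqe : ⟪q, e⟫ ≤ 0 := by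
    rw [hqv, h.fderiv_self he]
    linarith [h.fderiv_le hc hc1 he hu]
  have hqe' : -(t * (η ^ 2 / 2)) ≤ ⟪q, e⟫ := by
    rw [hqv]
    linarith [hthin u hu hu1]
  have hqE : ⟪q, Etop n⟫ = q (Fin.last n) := by rw [real_inner_comm, inner_Etop]
  have hqE' : -(2 * A) ≤ q (Fin.last n) := by
    have h1 := abs_real_inner_le_norm q (Etop n)
    rw [norm_Etop, mul_one, hqE] at h1
    linarith [neg_abs_le (q (Fin.last n))]
  have hqsq : ‖q‖ ^ 2 ≤ 4 * A ^ 2 := by nlinarith [norm_nonneg q]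
  set x := e + t • q + (t ^ 2 * M) • Etop n with hx
  have hheight : c ≤ e (Fin.last n) + t * q (Fin.last n) := by
    by_cases hec : e (Fin.last n) = c
    · have : 0 ≤ q (Fin.last n) := by
        rw [← hqE, hqv, h.robin e he he1 hec, sub_zero]
        exact h.height_nonneg hn hc hc1 hu hu1
      nlinarith
    · nlinarith [hm hec]
  have hnorm : ‖e + t • q‖ ≤ 1 + 2 * A ^ 2 * t ^ 2 := by
    refine (sq_le_sq₀ (norm_nonneg _) (by positivity)).1 ?_
    rw [norm_add_sq_real, he1, inner_smul_right, norm_smul, Real.norm_of_nonneg ht0.le,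
      real_inner_comm]
    have h1 : t * ⟪q, e⟫ ≤ 0 := mul_nonpos_of_nonneg_of_nonpos ht0.le hqe
    have h2 := mul_le_mul_of_nonneg_left hqsq (sq_nonneg t)
    nlinarith [sq_nonneg (A ^ 2 * t ^ 2)]
  have hxO : x ∈ openCone n c := by
    change c * ‖x‖ < e (Fin.last n) + t * q (Fin.last n) + (t ^ 2 * M) * Etop n (Fin.last n)
    rw [Etop_last, mul_one]
    have h1 : ‖x‖ ≤ 1 + 2 * A ^ 2 * t ^ 2 + t ^ 2 * M := by
      refine (norm_add_le _ _).trans ?_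
      rw [norm_smul, norm_Etop, mul_one, Real.norm_of_nonneg (by positivity)]
      linarith
    have h2 := mul_le_mul_of_nonneg_left h1 hc
    have h3 := mul_lt_mul_of_pos_left hM (pow_pos ht0 2)
    linarith
  have hxe : ‖x - e‖ ≤ t * B := by
    have h1 : x - e = t • q + (t ^ 2 * M) • Etop n := by rw [hx]; abel
    rw [h1]
    refine (norm_add_le _ _).trans ?_
    rw [norm_smul, norm_smul, norm_Etop, mul_one, Real.norm_of_nonneg ht0.le,
      Real.norm_of_nonneg (by positivity)]
    have h2 := mul_le_mul_of_nonneg_left hqA ht0.le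
    have h3 : t ^ 2 * M ≤ t * M := by
      refine mul_le_mul_of_nonneg_right ?_ hM0.le
      nlinarith
    rw [hB]
    linarith
  have key : ⟪q, x⟫ ≤ 2 * A * (t * B) ^ 2 := by
    have h1 := h.le_fderiv_add_sq hc hc1 hA.le he he1 hxO (hxe.trans_lt htB)
    have h2 := h.fderiv_le hc hc1 (openCone_subset_wideCone hxO) hu
    have h3 : ‖x - e‖ ^ 2 ≤ (t * B) ^ 2 := by gcongr
    have h4 := mul_le_mul_of_nonneg_left h3 (by positivity : 0 ≤ 2 * A)
    rw [hqv]
    linarith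
  rw [hx, inner_add_right, inner_add_right, inner_smul_right, inner_smul_right,
    real_inner_self_eq_norm_sq, hqE] at key
  have h1 := mul_le_mul_of_nonneg_left hqE' (by positivity : 0 ≤ t ^ 2 * M)
  have h2 : t * ‖q‖ ^ 2 ≤ t * η ^ 2 := by
    have h3 := mul_le_mul_of_nonneg_left htD ht0.le
    rw [hD] at h3
    linarith
  have h3 := le_of_mul_le_mul_left h2 ht0
  exact (sq_le_sq₀ (norm_nonneg _) hη.le).1 h3

/-- The lower bound on the Laplacian keeps the gradient image away from being a point. -/
theorem exists_gradient_spread (n : ℕ) (hc : 0 ≤ c) (hc1 : c < 1) (hδ : 0 < δ) :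
    ∃ η : ℝ, 0 < η ∧ ∀ A G, IsCapillaryPotential n c A δ G → ∀ p : V n,
      ∃ u ∈ wideCone n c, ‖u‖ = 1 ∧ η < ‖gradient G u - p‖ := by
  set r := (1 - c) / 4 with hr
  have hr0 : 0 < r := by rw [hr]; linarith
  set κ := δ / (4 * (n + 1)) with hκ
  have hκ0 : 0 < κ := by positivity
  refine ⟨κ * r / 4, by positivity, fun A G h p => ?_⟩
  by_contra! hcon
  have hball : Metric.closedBall (Etop n) r ⊆ openCone n c := by
    intro x hx
    rw [mem_closedBall_iff_norm] at hx
    have h1 : ‖x‖ ≤ 1 + r := by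
      have := norm_sub_norm_le x (Etop n)
      rw [norm_Etop] at this
      linarith
    have h2 : 1 - r ≤ x (Fin.last n) := by
      have h3 := (abs_real_inner_le_norm (Etop n) (x - Etop n))
      rw [inner_sub_right, inner_Etop, inner_Etop, Etop_last, norm_Etop, one_mul] at h3
      linarith [neg_abs_le (x (Fin.last n) - 1)]
    change c * ‖x‖ < x (Fin.last n)
    have h4 := mul_le_mul_of_nonneg_left h1 hc
    nlinarith
  have hclose : ∀ x ∈ openCone n c, ∀ v, fderiv ℝ G x v - ⟪p, v⟫ ≤ κ * r / 4 * ‖v‖ := by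
    intro x hx v
    obtain ⟨h1, h2⟩ := normalize_mem hx
    have h3 := hcon _ (openCone_subset_wideCone h1) h2
    have h4 : fderiv ℝ G (‖x‖⁻¹ • x) = fderiv ℝ G x :=
      h.fderiv_smul (inv_pos.2 (norm_pos_iff.2 (openCone_subset_wideCone hx).1)) hx
    have h5 := real_inner_le_norm (gradient G (‖x‖⁻¹ • x) - p) v
    rw [inner_sub_left, inner_gradient_left, h4] at h5
    exact h5.trans (mul_le_mul_of_nonneg_right h3 (norm_nonneg v))
  set f : V n → ℝ := fun x => G x - ⟪p, x⟫ - κ / 2 * ‖x - Etop n‖ ^ 2 with hf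
  have hfc : ContinuousOn f (Metric.closedBall (Etop n) r) := by
    intro x hx
    have h1 := (h.differentiableAt (openCone_subset_wideCone (hball hx))).continuousAt
    have h2 : Continuous fun x : V n => ⟪p, x⟫ := by fun_prop
    have h3 : Continuous fun x : V n => κ / 2 * ‖x - Etop n‖ ^ 2 := by fun_prop
    exact ((h1.sub h2.continuousAt).sub h3.continuousAt).continuousWithinAt
  have hE : Etop n ∈ Metric.closedBall (Etop n) r := Metric.mem_closedBall_self hr0.le
  obtain ⟨z, hz, hmax⟩ := (isCompact_closedBall (Etop n) r).exists_isMaxOn ⟨_, hE⟩ hfc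
  have hzr : ‖z - Etop n‖ < r := by
    refine lt_of_le_of_ne (mem_closedBall_iff_norm.1 hz) fun hzr => ?_
    have h1 : f (Etop n) ≤ f z := hmax hE
    have h2 := h.grad_ineq hc (hball hE) (hball hz)
    have h3 := hclose z (hball hz) (z - Etop n)
    rw [map_sub] at h2
    rw [map_sub, inner_sub_right, hzr] at h3
    simp only [hf, hzr, sub_self, norm_zero] at h1
    nlinarith [mul_pos hκ0 (mul_pos hr0 hr0)]
  have hzO : z ∈ openCone n c := hball hz
  have hloc : IsLocalMax f z :=
    hmax.isLocalMax (Filter.mem_of_superset (Metric.isOpen_ball.mem_nhds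
      (mem_ball_iff_norm.2 hzr)) Metric.ball_subset_closedBall)
  have hdir : ∀ v : V n, ‖v‖ = 1 → fderiv ℝ (fderiv ℝ G) z v v ≤ κ := by
    intro v hv
    have hline : ∀ t : ℝ, HasDerivAt (fun s : ℝ => z + s • v) v t := fun t => by
      simpa using ((hasDerivAt_id t).smul_const v).const_add z
    have htend : Filter.Tendsto (fun s : ℝ => z + s • v) (nhds 0) (nhds z) := by
      simpa using (hline 0).continuousAt.tendsto
    have hmem : ∀ᶠ s : ℝ in nhds 0, z + s • v ∈ wideCone n c :=
      (htend.eventually ((isOpen_openCone n c).mem_nhds hzO)).mono fun s hs =>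
        openCone_subset_wideCone hs
    have hmax0 : IsLocalMax (fun s : ℝ => f (z + s • v)) 0 := by
      have := htend.eventually hloc
      simpa [IsLocalMax, IsMaxFilter] using this
    have hd1 : ∀ᶠ s : ℝ in nhds 0, HasDerivAt (fun s : ℝ => f (z + s • v))
        (fderiv ℝ G (z + s • v) v - ⟪p, v⟫ - κ * ⟪z + s • v - Etop n, v⟫) s := by
      filter_upwards [hmem] with s hs
      have h1 := h.hasDerivAt_line hs
      have h2 : HasDerivAt (fun s : ℝ => ⟪p, z + s • v⟫) ⟪p, v⟫ s := by
        simpa using (hasDerivAt_const s p).inner ℝ (hline s)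
      have h3 := (((hline s).sub_const (Etop n)).norm_sq).const_mul (κ / 2)
      refine ((h1.sub h2).sub h3).congr_deriv ?_
      ring
    have hd2 : HasDerivAt
        (fun s : ℝ => fderiv ℝ G (z + s • v) v - ⟪p, v⟫ - κ * ⟪z + s • v - Etop n, v⟫)
        (fderiv ℝ (fderiv ℝ G) z v v - κ) 0 := by
      have h1 := h.hasDerivAt_fderiv_line (t := 0) hmem.self_of_nhds
      have h2 : HasDerivAt (fun s : ℝ => ⟪z + s • v - Etop n, v⟫) 1 0 := by
        simpa [hv] using ((hline 0).sub_const (Etop n)).inner ℝ (hasDerivAt_const (0 : ℝ) v)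
      refine ((h1.sub_const ⟪p, v⟫).sub (h2.const_mul κ)).congr_deriv ?_
      simp
    have := nonpos_of_isLocalMax_of_hasDerivAt hmax0 hd1 hd2
    linarith
  have hsum := h.laplacian_ge hzO
  have hle : ∑ i, fderiv ℝ (fderiv ℝ G) z (EuclideanSpace.single i 1)
      (EuclideanSpace.single i 1) ≤ ∑ _i : Fin (n + 1), κ :=
    Finset.sum_le_sum fun i _ => hdir _ (by simp)
  rw [Finset.sum_const, Finset.card_univ, Fintype.card_fin, nsmul_eq_mul] at hle
  have hκn : ((n + 1 : ℕ) : ℝ) * κ = δ / 4 := by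
    rw [hκ]
    push_cast
    field_simp
  have hz2 : ‖z‖ ≤ 2 := by
    have := norm_sub_norm_le z (Etop n)
    rw [norm_Etop] at this
    linarith
  have hz0 : 0 < ‖z‖ := norm_pos_iff.2 (openCone_subset_wideCone hzO).1
  have hinv : (2 : ℝ)⁻¹ ≤ ‖z‖⁻¹ := inv_anti₀ hz0 hz2
  have := mul_le_mul_of_nonneg_right hinv hδ.le
  linarith

theorem exists_width_of_mem_cap (hn : 1 ≤ n) (hc : 0 ≤ c) (hc1 : c < 1) (hA : 0 < A)
    (hδ : 0 < δ) {e : V n} (he : e ∈ wideCone n c) (he1 : ‖e‖ = 1) :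
    ∃ ε : ℝ, 0 < ε ∧ ∀ G, IsCapillaryPotential n c A δ G →
      ∃ u ∈ wideCone n c, ‖u‖ = 1 ∧ ε ≤ fderiv ℝ G e e - fderiv ℝ G u e := by
  obtain ⟨η, hη, hspread⟩ := exists_gradient_spread n hc hc1 hδ
  obtain ⟨ε, hε, hthin⟩ := exists_thin_bound hn hc hc1 hA he he1 hη
  refine ⟨ε, hε, fun G h => ?_⟩
  by_contra! hcon
  obtain ⟨u, hu, hu1, hlt⟩ := hspread A G h (gradient G e)
  exact hlt.not_ge (hthin δ G h (fun w hw hw1 => (hcon w hw hw1).le) u hu hu1)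

theorem exists_width_of_nonneg (hn : 1 ≤ n) (hc : 0 ≤ c) (hc1 : c < 1) (hA : 0 < A)
    (hδ : 0 < δ) {e : V n} (he1 : ‖e‖ = 1) (he : 0 ≤ e (Fin.last n)) :
    ∃ ε : ℝ, 0 < ε ∧ ∀ G, IsCapillaryPotential n c A δ G →
      ∃ u ∈ wideCone n c, ‖u‖ = 1 ∧ ∃ w ∈ wideCone n c, ‖w‖ = 1 ∧
        ε ≤ fderiv ℝ G u e - fderiv ℝ G w e := by
  rcases le_or_gt c (e (Fin.last n)) with hce | hce
  · have hem : e ∈ wideCone n c := by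
      refine ⟨fun h0 => ?_, by rwa [he1, mul_one]⟩
      rw [h0, norm_zero] at he1
      exact zero_ne_one he1
    obtain ⟨ε, hε, h⟩ := exists_width_of_mem_cap hn hc hc1 hA hδ hem he1
    exact ⟨ε, hε, fun G hG => ⟨e, hem, he1, h G hG⟩⟩
  · obtain ⟨v, r, hv, hv0, hr, her, hsq⟩ := exists_horizontal_decomposition hn e
    obtain ⟨h1, h2, h3⟩ := boundary_point hc hc1 hv hv0
    set u₀ := √(1 - c ^ 2) • v + c • Etop n with hu₀
    have hE : Etop n ∈ wideCone n c := openCone_subset_wideCone (Etop_mem_openCone hc1)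
    obtain ⟨ε, hε, hw⟩ := exists_width_of_mem_cap hn hc hc1 hA hδ hE (norm_Etop n)
    have hs : 0 < √(1 - c ^ 2) := Real.sqrt_pos.2 (by nlinarith)
    have hsr : √(1 - c ^ 2) < r := by
      refine (Real.sqrt_lt' ?_).2 ?_
      · rw [he1] at hsq
        refine lt_of_le_of_ne hr fun h0 => ?_
        rw [← h0] at hsq
        nlinarith
      · rw [he1] at hsq
        nlinarith
    have hr0 : 0 < r := hs.trans hsr
    set a := √(1 - c ^ 2) / r with ha
    have ha0 : 0 < a := by positivity
    have ha1 : a < 1 := (div_lt_one hr0).2 hsr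
    set b := c - a * e (Fin.last n) with hb
    have hb0 : 0 < b := by nlinarith
    have hdec : u₀ = a • e + b • Etop n := by
      conv_rhs => rw [her]
      rw [hu₀, hb, smul_add, smul_smul, smul_smul, ha, div_mul_cancel₀ _ hr0.ne', sub_smul]
      abel
    have hL : ∀ L : V n →L[ℝ] ℝ, L u₀ = a * L e + b * L (Etop n) := by
      intro L
      rw [hdec]
      simp
    refine ⟨b * ε / a, by positivity, fun G hG => ⟨u₀, h1, h2, Etop n, hE, norm_Etop n, ?_⟩⟩
    obtain ⟨u, hu, hu1, hεu⟩ := hw G hG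
    have i1 := hG.height_nonneg hn hc hc1 hu hu1
    have i2 := hG.fderiv_le hc hc1 h1 hE
    rw [← hG.fderiv_self h1, hL, hL, hG.robin u₀ h1 h2 h3] at i2
    have i3 : b * ε ≤ b * fderiv ℝ G (Etop n) (Etop n) :=
      mul_le_mul_of_nonneg_left (by linarith) hb0.le
    rw [div_le_iff₀ ha0]
    linarith

theorem exists_width (hn : 1 ≤ n) (hc : 0 ≤ c) (hc1 : c < 1) (hA : 0 < A)
    (hδ : 0 < δ) {e : V n} (he1 : ‖e‖ = 1) :
    ∃ ε : ℝ, 0 < ε ∧ ∀ G, IsCapillaryPotential n c A δ G →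
      ∃ u ∈ wideCone n c, ‖u‖ = 1 ∧ ∃ w ∈ wideCone n c, ‖w‖ = 1 ∧
        ε ≤ fderiv ℝ G u e - fderiv ℝ G w e := by
  rcases le_total 0 (e (Fin.last n)) with he | he
  · exact exists_width_of_nonneg hn hc hc1 hA hδ he1 he
  · obtain ⟨ε, hε, h⟩ := exists_width_of_nonneg (e := -e) hn hc hc1 hA hδ (by rwa [norm_neg])
      (by change 0 ≤ -e (Fin.last n); linarith)
    refine ⟨ε, hε, fun G hG => ?_⟩
    obtain ⟨u, hu, hu1, w, hw, hw1, huw⟩ := h G hG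
    refine ⟨w, hw, hw1, u, hu, hu1, ?_⟩
    rw [map_neg, map_neg] at huw
    linarith

theorem exists_uniform_width (hn : 1 ≤ n) (hc : 0 ≤ c) (hc1 : c < 1) (hA : 0 < A)
    (hδ : 0 < δ) :
    ∃ ε : ℝ, 0 < ε ∧ ∀ e : V n, ‖e‖ = 1 → ∀ G, IsCapillaryPotential n c A δ G →
      ∃ u ∈ wideCone n c, ‖u‖ = 1 ∧ ∃ w ∈ wideCone n c, ‖w‖ = 1 ∧
        ε ≤ fderiv ℝ G u e - fderiv ℝ G w e := by
  suffices h : ∃ ε : ℝ, 0 < ε ∧ ∀ e ∈ Metric.sphere (0 : V n) 1,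
      ∀ G, IsCapillaryPotential n c A δ G →
      ∃ u ∈ wideCone n c, ‖u‖ = 1 ∧ ∃ w ∈ wideCone n c, ‖w‖ = 1 ∧
        ε ≤ fderiv ℝ G u e - fderiv ℝ G w e by
    obtain ⟨ε, hε, h⟩ := h
    exact ⟨ε, hε, fun e he => h e (by simpa using he)⟩
  refine (isCompact_sphere (0 : V n) 1).induction_on (p := fun s => ∃ ε : ℝ, 0 < ε ∧ ∀ e ∈ s,
      ∀ G, IsCapillaryPotential n c A δ G →
      ∃ u ∈ wideCone n c, ‖u‖ = 1 ∧ ∃ w ∈ wideCone n c, ‖w‖ = 1 ∧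
        ε ≤ fderiv ℝ G u e - fderiv ℝ G w e) ⟨1, one_pos, by simp⟩ ?_ ?_ ?_
  · rintro s t hst ⟨ε, hε, h⟩
    exact ⟨ε, hε, fun e he => h e (hst he)⟩
  · rintro s t ⟨ε₁, hε₁, h₁⟩ ⟨ε₂, hε₂, h₂⟩
    refine ⟨min ε₁ ε₂, lt_min hε₁ hε₂, fun e he G hG => ?_⟩
    rcases he with he | he
    · obtain ⟨u, hu, hu1, w, hw, hw1, huw⟩ := h₁ e he G hG
      exact ⟨u, hu, hu1, w, hw, hw1, (min_le_left _ _).trans huw⟩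
    · obtain ⟨u, hu, hu1, w, hw, hw1, huw⟩ := h₂ e he G hG
      exact ⟨u, hu, hu1, w, hw, hw1, (min_le_right _ _).trans huw⟩
  · intro e he
    obtain ⟨ε, hε, h⟩ := exists_width hn hc hc1 hA hδ (mem_sphere_zero_iff_norm.1 he)
    refine ⟨Metric.ball e (ε / (4 * A)),
      mem_nhdsWithin_of_mem_nhds (Metric.ball_mem_nhds e (by positivity)), ε / 2, by positivity,
      fun e' he' G hG => ?_⟩
    obtain ⟨u, hu, hu1, w, hw, hw1, huw⟩ := h G hG
    refine ⟨u, hu, hu1, w, hw, hw1, ?_⟩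
    rw [mem_ball_iff_norm, lt_div_iff₀ (by positivity)] at he'
    have h1 := (abs_le.1 ((fderiv ℝ G u).le_of_opNorm_le (hG.grad_le u hu hu1) (e' - e))).1
    have h2 := (abs_le.1 ((fderiv ℝ G w).le_of_opNorm_le (hG.grad_le w hw hw1) (e' - e))).2
    rw [map_sub] at h1 h2
    linarith

end IsCapillaryPotential

theorem mem_coneCap_of_mem_wideCone {n : ℕ} {θ : ℝ} {x : V n} (hx : x ∈ wideCone n (cos θ)) :
    ‖x‖⁻¹ • x ∈ sphCap n θ ∧ x = ‖x‖ • ‖x‖⁻¹ • x := by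
  have h0 : 0 < ‖x‖ := norm_pos_iff.2 hx.1
  refine ⟨⟨norm_smul_inv_norm (𝕜 := ℝ) hx.1, ?_⟩, (smul_inv_smul₀ h0.ne' x).symm⟩
  change cos θ ≤ ‖x‖⁻¹ * x (Fin.last n)
  rw [inv_mul_eq_div, le_div_iff₀ h0]
  exact hx.2

theorem mem_sphCap_iff {n : ℕ} {θ : ℝ} {u : V n} (hu1 : ‖u‖ = 1) :
    u ∈ sphCap n θ ↔ u ∈ wideCone n (cos θ) := by
  have : u ≠ 0 := norm_ne_zero_iff.1 (by rw [hu1]; exact one_ne_zero)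
  simp [sphCap, wideCone, hu1, this]

theorem posSemidef_hessM {n : ℕ} {G : V n → ℝ} {u : V n} (hG : ContDiffAt ℝ 3 G u)
    (hpos : ∀ v, 0 ≤ hessQ n G u v v) : (hessM n G u).PosSemidef := by
  refine Matrix.PosSemidef.of_dotProduct_mulVec_nonneg ?_ fun x => ?_
  · ext i j
    exact hG.isSymmSndFDerivAt (by simpa using by norm_cast) _ _
  · have h := hpos (∑ i, x i • EuclideanSpace.single i 1)
    simp only [hessQ, map_sum, map_smul, FunLike.coe_sum, FunLike.coe_smul, Finset.sum_apply,
      Pi.smul_apply, smul_eq_mul] at h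
    simp only [Finset.mul_sum] at h
    rw [Finset.sum_comm] at h
    simpa [dotProduct, Matrix.mulVec, hessM, Finset.mul_sum, mul_comm, mul_left_comm] using h

theorem min_one_le_laplacian {n k : ℕ} {G : V n → ℝ} {u : V n} {c₀ : ℝ} (hk : 1 ≤ k)
    (hkn : k ≤ n) (hG : ContDiffAt ℝ 3 G u) (hpos : ∀ v, 0 ≤ hessQ n G u v v)
    (hσ : c₀ ≤ sigmaElem n k G u) :
    min 1 c₀ ≤ ∑ i, fderiv ℝ (fderiv ℝ G) u (EuclideanSpace.single i 1)
      (EuclideanSpace.single i 1) := by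
  have hM := posSemidef_hessM hG hpos
  have h1 : c₀ ≤ (hessM n G u).trace ^ k :=
    hσ.trans (hM.charpoly_coeff_le_trace_pow (hkn.trans n.le_succ))
  change min 1 c₀ ≤ (hessM n G u).trace
  rcases le_total 1 (hessM n G u).trace with h2 | h2
  · exact (min_le_left _ _).trans h2
  · exact (min_le_right _ _).trans
      (h1.trans (pow_le_of_le_one hM.trace_nonneg h2 (Nat.one_le_iff_ne_zero.1 hk)))

theorem isCapillaryPotential_of_isHomExt {n k : ℕ} {θ A c₀ : ℝ} (hk : 1 ≤ k) (hkn : k ≤ n)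
    {s G : V n → ℝ} (hext : IsHomExt n θ ⊤ s G) (hcap : IsCapillaryF n θ G)
    (hτ : TauNonneg n θ G)
    (hC2 : ∀ u ∈ sphCap n θ, |G u| + ‖fderiv ℝ G u‖ + ‖fderiv ℝ (fderiv ℝ G) u‖ ≤ A)
    (hσ : ∀ ζ ∈ capCap n θ, c₀ ≤ sigmaElem n k G (ζ + cos θ • Etop n)) :
    IsCapillaryPotential n (cos θ) A (min 1 c₀) G := by
  obtain ⟨⟨U, hU, hcone, hsm⟩, hhom, -⟩ := hext
  have hsmooth : ∀ x ∈ wideCone n (cos θ), ContDiffAt ℝ 3 G x := fun x hx => by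
    obtain ⟨h1, h2⟩ := mem_coneCap_of_mem_wideCone hx
    have hxU : x ∈ U := hcone ⟨_, norm_pos_iff.2 hx.1, _, h1, h2⟩
    exact (hsm.contDiffAt (hU.mem_nhds hxU)).of_le 
      (WithTop.coe_le_coe.2 (le_top : (3 : ℕ∞) ≤ ⊤))
  refine ⟨hsmooth, fun l hl x hx => ?_, fun u _ hu1 huc => hcap u ⟨hu1, huc⟩,
    fun u hu hu1 => hτ u ((mem_sphCap_iff hu1).2 hu), fun u hu hu1 => ?_, fun u hu hu1 => ?_,
    fun u hu hu1 => ?_⟩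
  · obtain ⟨h1, h2⟩ := mem_coneCap_of_mem_wideCone hx
    have h0 : 0 < ‖x‖ := norm_pos_iff.2 hx.1
    have h3 := hhom _ h0 _ h1
    have h4 := hhom _ (mul_pos hl h0) _ h1
    rw [← h2] at h3
    rw [mul_smul, ← h2] at h4
    rw [h4, h3, mul_assoc]
  · have := hC2 u ((mem_sphCap_iff hu1).2 hu)
    linarith [abs_nonneg (G u), norm_nonneg (fderiv ℝ (fderiv ℝ G) u)]
  · have := hC2 u ((mem_sphCap_iff hu1).2 hu)
    linarith [abs_nonneg (G u), norm_nonneg (fderiv ℝ G u)]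
  · have hcap' := (mem_sphCap_iff hu1).2 hu
    refine min_one_le_laplacian hk hkn (hsmooth u hu) (hτ u hcap') ?_
    have h := hσ (u - cos θ • Etop n) ⟨?_, by rwa [sub_add_cancel]⟩
    · rwa [sub_add_cancel] at h
    · change 0 ≤ u (Fin.last n) - cos θ * Etop n (Fin.last n)
      rw [Etop_last, mul_one]
      exact sub_nonneg.2 hcap'.2

/-- uniform lower volume bound. -/
theorem capillary_volume_lower_bound (n k : ℕ) (hn : 1 ≤ n) (θ : ℝ)
    (hθ : θ ∈ Ioc 0 (π / 2)) (hk : 1 ≤ k) (hkn : k ≤ n)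
    (A c₀ c₁ : ℝ) (hA : 0 < A) (hc₀ : 0 < c₀) (hc₁ : 0 < c₁)
    (s G : ℕ → V n → ℝ)
    (hext : ∀ i, IsHomExt n θ ⊤ (s i) (G i))
    (hcap : ∀ i, IsCapillaryF n θ (G i))
    (hτ : ∀ i, TauPos n θ (G i))
    (hC2 : ∀ i, ∀ u ∈ sphCap n θ,
      |G i u| + ‖fderiv ℝ (G i) u‖ + ‖fderiv ℝ (fderiv ℝ (G i)) u‖ ≤ A)
    (hint : ∀ i, ∀ j : Fin (n + 1), j ≠ Fin.last n →
      ∫ ζ in capCap n θ, s i ζ * ζ j ∂μH[(n : ℝ)] = 0)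
    (hσ : ∀ i, ∀ ζ ∈ capCap n θ,
      c₀ ≤ sigmaElem n k (G i) (ζ + Real.cos θ • Etop n))
    (hbase : ∀ i, c₁ ≤ sSup {r : ℝ |
      ∃ x ∈ convexHull ℝ (gradient (G i) '' sphCap n θ) ∩
        {y : V n | y (Fin.last n) = 0},
      ∃ v : V n, ‖v‖ = 1 ∧ v (Fin.last n) = 0 ∧ ⟪v, x⟫ = r}) :
    ∃ c₂ : ℝ, 0 < c₂ ∧ ∀ i,
      ENNReal.ofReal c₂ ≤ volume (convexHull ℝ (gradient (G i) '' sphCap n θ)) := by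
  have hc : 0 ≤ cos θ := cos_nonneg_of_mem_Icc ⟨by linarith [hθ.1, pi_pos], hθ.2⟩
  have hc1 : cos θ < 1 := by
    have := cos_lt_cos_of_nonneg_of_le_pi_div_two le_rfl hθ.2 hθ.1
    rwa [cos_zero] at this
  obtain ⟨ε, hε, hw⟩ := IsCapillaryPotential.exists_uniform_width hn hc hc1 hA
    (lt_min one_pos hc₀)
  obtain ⟨c₂, hc₂, hvol⟩ := exists_volume_lower_bound_of_width (n + 1) n.succ_pos hε
  refine ⟨c₂, hc₂, fun i => hvol _ (convex_convexHull ℝ _) fun e he => ?_⟩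
  obtain ⟨u, hu, hu1, w, hw, hw1, h⟩ := hw e he (G i)
    (isCapillaryPotential_of_isHomExt hk hkn (hext i) (hcap i) (hτ i).1 (hC2 i) (hσ i))
  refine ⟨gradient (G i) u, subset_convexHull ℝ _ (mem_image_of_mem _ ((mem_sphCap_iff hu1).2 hu)),
    gradient (G i) w, subset_convexHull ℝ _ (mem_image_of_mem _ ((mem_sphCap_iff hw1).2 hw)), ?_⟩
  rwa [real_inner_comm, inner_sub_left, inner_gradient_left, inner_gradient_left]
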